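/- Let Ω ⊂ [0,∞)² be a strongly convex moment domain. Then the limits lim_{k→∞} 𝔩_k(Ω)/k and lim_{k→∞} 𝔲_k(Ω)/k exist and both are equal to inf { ‖(w₁,w₂)‖*_Ω / (1 + w₁ + w₂) : (w₁,w₂) ∈ ℤ²_{≥0} \ {(0,0)} }. -/

import Mathlib

/-!
Write `N` for the `Ω`-norm, `|w| = w₁ + w₂`, and `L = inf N(w) / (1 + |w|)`. Both limits follow by
squeezing `L (k + 1) ≤ 𝔩_k ≤ 𝔲_k ≤ (k / (1 + |w|) + 1) N(w) + C`, for every `w ≥ 0` nonzero, with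
`C` independent of `k`.

*Lower bound* (`lower_bound`). Symmetry and convexity of `Ω̂` show that `Ω` is stable under setting
coordinates to zero (`IsStronglyConvexDomain.cut_mem`), so `N v` dominates `N v⁺`. If `v` has a
positive entry then `N v ≥ L (1 + |v⁺|)`; otherwise `v` is a nonzero integer vector with `v ≤ 0`,
so `v₁ + v₂ ≤ -1` and `N v ≥ 0 ≥ L (1 + v₁ + v₂)`. In both cases `N v ≥ L (1 + v₁ + v₂)`, and
summing over a closed sequence of length `m ≥ k + 1` gives `L m`.

*Upper bound* (`uk_le`). Since `N` is nonpositive on nonpositive vectors, the closed sequence made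
of `n` copies of `w`, of `-e₁` repeated `n w₁` times and of `-e₂` repeated `n w₂` times has length
`n (1 + |w|)` and costs at most `n N(w)`. Adjoining `±e₁, ±e₂` makes it admissible for `𝔲_k` at a
bounded extra cost.
-/

open scoped BigOperators

/-- The `Ω`-norm `‖v‖*_Ω = sup_{u ∈ Ω} ⟨u, v⟩`. -/
noncomputable def omegaNorm {n : ℕ} (Ω : Set (Fin n → ℝ)) (v : Fin n → ℝ) : ℝ :=
  sSup ((fun u => ∑ i, u i * v i) '' Ω)

/-- Coercion of an integer vector to a real vector. -/
def toR {n : ℕ} (v : Fin n → ℤ) : Fin n → ℝ := fun i => (v i : ℝ)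

/-- The set of values `∑ ‖v_i‖*_Ω` over sequences `v_1, …, v_m ∈ ℤⁿ \ 0`
with `m ≥ k+1` and `∑ v_i = 0`. -/
def lSet {n : ℕ} (Ω : Set (Fin n → ℝ)) (k : ℕ) : Set ℝ :=
  {x | ∃ (m : ℕ) (v : Fin m → Fin n → ℤ),
    k + 1 ≤ m ∧ (∀ i, v i ≠ 0) ∧ (∑ i, v i) = 0 ∧
    x = ∑ i, omegaNorm Ω (toR (v i))}

/-- The lower bound quantity `𝔩_k(Ω)`. -/
noncomputable def lk {n : ℕ} (Ω : Set (Fin n → ℝ)) (k : ℕ) : ℝ := sInf (lSet Ω k)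

/-- The standard basis vector `e_j` of `ℤ²`. -/
def eInt (j : Fin 2) : Fin 2 → ℤ := Pi.single j 1

/-- The admissibility condition on sequences for `𝔲_k`: either `m = 2` and the
sequence is `e_j, -e_j` for some `j`, or for each `j` some `v_i` is not in the
`ℝ`-span of `e_j`. -/
def uAdmissible (m : ℕ) (v : Fin m → Fin 2 → ℤ) : Prop :=
  (m = 2 ∧ ∃ j : Fin 2, ∃ i₁ i₂ : Fin m, i₁ ≠ i₂ ∧ v i₁ = eInt j ∧ v i₂ = -eInt j) ∨
  (∀ j : Fin 2, ∃ i : Fin m, ∃ j' : Fin 2, j' ≠ j ∧ v i j' ≠ 0)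

/-- The set of values `∑ ‖v_i‖*_Ω` over admissible sequences for `𝔲_k`. -/
def uSet (Ω : Set (Fin 2 → ℝ)) (k : ℕ) : Set ℝ :=
  {x | ∃ (m : ℕ) (v : Fin m → Fin 2 → ℤ),
    k + 1 ≤ m ∧ (∀ i, v i ≠ 0) ∧ (∑ i, v i) = 0 ∧ uAdmissible m v ∧
    x = ∑ i, omegaNorm Ω (toR (v i))}

/-- The upper bound quantity `𝔲_k(Ω)`. -/
noncomputable def uk (Ω : Set (Fin 2 → ℝ)) (k : ℕ) : ℝ := sInf (uSet Ω k)

/-- The symmetrization `Ω̂ = {x : (|x₁|, |x₂|) ∈ Ω}`. -/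
def hatSet (Ω : Set (Fin 2 → ℝ)) : Set (Fin 2 → ℝ) := {x | (fun i => |x i|) ∈ Ω}

/-- A strongly convex moment domain: `Ω ⊂ [0,∞)²` with `Ω̂` convex and compact
with nonempty interior. -/
def IsStronglyConvexDomain (Ω : Set (Fin 2 → ℝ)) : Prop :=
  (∀ u ∈ Ω, ∀ i, 0 ≤ u i) ∧ Convex ℝ (hatSet Ω) ∧ IsCompact (hatSet Ω) ∧
    (interior (hatSet Ω)).Nonempty

/-- The width `a(Ω) = max {a : (a,0) ∈ Ω}`. -/
noncomputable def widthA (Ω : Set (Fin 2 → ℝ)) : ℝ := sSup {a : ℝ | ![a, 0] ∈ Ω}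

/-- The width `b(Ω) = max {b : (0,b) ∈ Ω}`. -/
noncomputable def widthB (Ω : Set (Fin 2 → ℝ)) : ℝ := sSup {b : ℝ | ![0, b] ∈ Ω}

open Filter

/-! ### The norm of a strongly convex domain -/

namespace IsStronglyConvexDomain

variable {Ω : Set (Fin 2 → ℝ)}

lemma mem_hat (h : IsStronglyConvexDomain Ω) {u : Fin 2 → ℝ} (hu : u ∈ Ω) : u ∈ hatSet Ω := by
  have : (fun i => |u i|) = u := funext fun i => abs_of_nonneg (h.1 u hu i)
  simpa [hatSet, this] using hu

lemma nonempty (h : IsStronglyConvexDomain Ω) : Ω.Nonempty := by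
  obtain ⟨x, hx⟩ := h.2.2.2
  have hx' : x ∈ hatSet Ω := interior_subset hx
  exact ⟨_, hx'⟩

/-- `Ω` is stable under setting coordinates to zero: the result is the midpoint of the original
point and its reflection in these coordinates, both of which lie in `Ω̂`. -/
lemma cut_mem (h : IsStronglyConvexDomain Ω) {u : Fin 2 → ℝ} (hu : u ∈ Ω)
    (P : Fin 2 → Prop) [DecidablePred P] : (fun i => if P i then 0 else u i) ∈ Ω := by
  have hflip : (fun i => if P i then -u i else u i) ∈ hatSet Ω := by
    have : (fun i => |if P i then -u i else u i|) = u := by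
      funext i
      split_ifs <;> simp [abs_of_nonneg (h.1 u hu i)]
    simpa [hatSet, this] using hu
  have hmid := h.2.1 (h.mem_hat hu) hflip (by norm_num : (0 : ℝ) ≤ 1 / 2)
    (by norm_num : (0 : ℝ) ≤ 1 / 2) (by norm_num)
  have habs : (fun i => |((1 / 2 : ℝ) • u + (1 / 2 : ℝ) • fun i => if P i then -u i else u i) i|)
      = fun i => if P i then 0 else u i := by
    funext i
    simp only [Pi.add_apply, Pi.smul_apply, smul_eq_mul]
    split_ifs
    · simp
    · rw [← abs_of_nonneg (h.1 u hu i)]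
      congr 1
      rw [abs_of_nonneg (h.1 u hu i)]
      ring
  have : (fun i => |((1 / 2 : ℝ) • u + (1 / 2 : ℝ) • fun i => if P i then -u i else u i) i|) ∈ Ω :=
    hmid
  rwa [habs] at this

lemma bddAbove (h : IsStronglyConvexDomain Ω) (v : Fin 2 → ℝ) :
    BddAbove ((fun u => ∑ i, u i * v i) '' Ω) := by
  have hc : Continuous fun u : Fin 2 → ℝ => ∑ i, u i * v i := by fun_prop
  exact (h.2.2.1.bddAbove_image hc.continuousOn).mono
    (Set.image_mono fun u hu => h.mem_hat hu)

lemma omegaNorm_nonneg (h : IsStronglyConvexDomain Ω) (v : Fin 2 → ℝ) : 0 ≤ omegaNorm Ω v := by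
  obtain ⟨u, hu⟩ := h.nonempty
  refine le_csSup (h.bddAbove v) ⟨_, h.cut_mem hu (fun _ => True), ?_⟩
  simp

lemma omegaNorm_nonpos (h : IsStronglyConvexDomain Ω) {v : Fin 2 → ℝ} (hv : ∀ i, v i ≤ 0) :
    omegaNorm Ω v ≤ 0 := by
  refine csSup_le (h.nonempty.image _) ?_
  rintro _ ⟨u, hu, rfl⟩
  exact Finset.sum_nonpos fun i _ => mul_nonpos_of_nonneg_of_nonpos (h.1 u hu i) (hv i)

lemma omegaNorm_posPart_le (h : IsStronglyConvexDomain Ω) (v : Fin 2 → ℝ) :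
    omegaNorm Ω (fun i => max (v i) 0) ≤ omegaNorm Ω v := by
  classical
  refine csSup_le (h.nonempty.image _) ?_
  rintro _ ⟨u, hu, rfl⟩
  refine le_csSup (h.bddAbove v) ⟨_, h.cut_mem hu (fun i => v i < 0), ?_⟩
  refine Finset.sum_congr rfl fun i _ => ?_
  by_cases hi : v i < 0
  · simp [hi, hi.le]
  · simp [hi, not_lt.mp hi]

end IsStronglyConvexDomain

/-! ### Lower bound for closed sequences -/

section

/-- The set of ratios `‖w‖*_Ω / (1 + w₁ + w₂)` over nonzero `w ∈ ℤ²_{≥0}`. -/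
def ratioSet (Ω : Set (Fin 2 → ℝ)) : Set ℝ :=
  {x : ℝ | ∃ w : Fin 2 → ℤ, (∀ i, 0 ≤ w i) ∧ w ≠ 0 ∧
    x = omegaNorm Ω (toR w) / (1 + (w 0 : ℝ) + (w 1 : ℝ))}

variable {Ω : Set (Fin 2 → ℝ)}

lemma ratioSet_nonneg (h : IsStronglyConvexDomain Ω) {x : ℝ} (hx : x ∈ ratioSet Ω) : 0 ≤ x := by
  obtain ⟨w, hw, -, rfl⟩ := hx
  have h0 : (0 : ℝ) ≤ w 0 := by exact_mod_cast hw 0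
  have h1 : (0 : ℝ) ≤ w 1 := by exact_mod_cast hw 1
  exact div_nonneg (h.omegaNorm_nonneg _) (by linarith)

lemma ratioSet_nonempty (Ω : Set (Fin 2 → ℝ)) : (ratioSet Ω).Nonempty :=
  ⟨_, fun _ => 1, fun _ => zero_le_one, fun h => one_ne_zero (congrFun h 0), rfl⟩

/-- The termwise inequality behind the lower bound: the linear function `1 + v₁ + v₂`, scaled by
the infimum of the ratios, bounds the `Ω`-norm from below on nonzero integer vectors. -/
lemma sInf_ratio_mul_le (h : IsStronglyConvexDomain Ω) {v : Fin 2 → ℤ} (hv : v ≠ 0) :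
    sInf (ratioSet Ω) * (1 + (v 0 : ℝ) + (v 1 : ℝ)) ≤ omegaNorm Ω (toR v) := by
  have hL : 0 ≤ sInf (ratioSet Ω) := Real.sInf_nonneg fun x hx => ratioSet_nonneg h hx
  by_cases hpos : ∃ i, 0 < v i
  · set w : Fin 2 → ℤ := fun i => max (v i) 0 with hw
    have hw0 : ∀ i, 0 ≤ w i := fun i => le_max_right _ _
    have hwne : w ≠ 0 := by
      obtain ⟨i, hi⟩ := hpos
      intro hz
      have := congrFun hz i
      simp only [hw, Pi.zero_apply] at this
      omega
    have hle : sInf (ratioSet Ω) ≤ omegaNorm Ω (toR w) / (1 + (w 0 : ℝ) + (w 1 : ℝ)) :=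
      csInf_le ⟨0, fun x hx => ratioSet_nonneg h hx⟩ ⟨w, hw0, hwne, rfl⟩
    have h0 : (0 : ℝ) ≤ w 0 := by exact_mod_cast hw0 0
    have h1 : (0 : ℝ) ≤ w 1 := by exact_mod_cast hw0 1
    have h0' : (v 0 : ℝ) ≤ w 0 := by exact_mod_cast le_max_left _ _
    have h1' : (v 1 : ℝ) ≤ w 1 := by exact_mod_cast le_max_left _ _
    rw [le_div_iff₀ (by linarith)] at hle
    have hN : omegaNorm Ω (toR w) ≤ omegaNorm Ω (toR v) := by
      have : toR w = fun i => max (toR v i) 0 := by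
        funext i
        simp [toR, hw]
      rw [this]
      exact h.omegaNorm_posPart_le _
    calc _ ≤ sInf (ratioSet Ω) * (1 + (w 0 : ℝ) + (w 1 : ℝ)) :=
          mul_le_mul_of_nonneg_left (by linarith) hL
      _ ≤ _ := hle.trans hN
  · push Not at hpos
    have hs : 1 + v 0 + v 1 ≤ 0 := by
      have h0 := hpos 0
      have h1 := hpos 1
      by_contra hc
      refine hv (funext fun i => ?_)
      fin_cases i <;> simp <;> omega
    have hs' : 1 + (v 0 : ℝ) + (v 1 : ℝ) ≤ 0 := by exact_mod_cast hs
    exact (mul_nonpos_of_nonneg_of_nonpos hL hs').trans (h.omegaNorm_nonneg _)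

lemma lower_bound (h : IsStronglyConvexDomain Ω) {k : ℕ} {x : ℝ} (hx : x ∈ lSet Ω k) :
    sInf (ratioSet Ω) * (k + 1) ≤ x := by
  obtain ⟨m, v, hm, hv, hsum, rfl⟩ := hx
  have hL : 0 ≤ sInf (ratioSet Ω) := Real.sInf_nonneg fun x hx => ratioSet_nonneg h hx
  have hcoord : ∀ j, ∑ i, (v i j : ℝ) = 0 := fun j => by
    have := congrFun hsum j
    rw [Finset.sum_apply] at this
    exact_mod_cast this
  have hm' : (k : ℝ) + 1 ≤ m := by exact_mod_cast hm
  calc sInf (ratioSet Ω) * (k + 1) ≤ sInf (ratioSet Ω) * m := mul_le_mul_of_nonneg_left hm' hL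
    _ = ∑ i, sInf (ratioSet Ω) * (1 + (v i 0 : ℝ) + (v i 1 : ℝ)) := by
      rw [← Finset.mul_sum, Finset.sum_add_distrib, Finset.sum_add_distrib, hcoord, hcoord]
      simp
    _ ≤ _ := Finset.sum_le_sum fun i _ => sInf_ratio_mul_le h (hv i)

/-! ### Admissible sequences built from copies of `w` -/

lemma uSet_subset_lSet (Ω : Set (Fin 2 → ℝ)) (k : ℕ) : uSet Ω k ⊆ lSet Ω k := by
  rintro x ⟨m, v, hm, hv, hs, -, hx⟩
  exact ⟨m, v, hm, hv, hs, hx⟩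

/-- Members of `uSet` may be given by families over an arbitrary finite index type. -/
lemma mem_uSet_of_fintype {ι : Type*} [Fintype ι] (v : ι → Fin 2 → ℤ) {k : ℕ}
    (hk : k + 1 ≤ Fintype.card ι) (hv : ∀ i, v i ≠ 0) (hsum : ∑ i, v i = 0)
    (hadm : ∀ j : Fin 2, ∃ i : ι, ∃ j' : Fin 2, j' ≠ j ∧ v i j' ≠ 0) :
    ∑ i, omegaNorm Ω (toR (v i)) ∈ uSet Ω k := by
  let e := (Fintype.equivFin ι).symm
  refine ⟨Fintype.card ι, v ∘ e, hk, fun i => hv _, ?_, Or.inr fun j => ?_, ?_⟩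
  · rw [← hsum]
    exact e.sum_comp v
  · obtain ⟨i, j', hj, hi⟩ := hadm j
    exact ⟨e.symm i, j', hj, by simpa using hi⟩
  · exact (e.sum_comp fun i => omegaNorm Ω (toR (v i))).symm

/-- The index type of the sequence for the upper bound: `n` blocks, each with one slot for `w` and
`w j` slots for `-e_j`, followed by four slots for `±e₁, ±e₂`. -/
abbrev BlockIndex (w : Fin 2 → ℤ) (n : ℕ) : Type :=
  (Fin n × Option (Σ j : Fin 2, Fin (w j).toNat)) ⊕ (Fin 2 × Bool)

/-- The sequence for the upper bound, see `BlockIndex`. -/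
def blockSeq (w : Fin 2 → ℤ) (n : ℕ) : BlockIndex w n → Fin 2 → ℤ
  | .inl (_, none) => w
  | .inl (_, some p) => -eInt p.1
  | .inr (j, true) => eInt j
  | .inr (j, false) => -eInt j

lemma eInt_ne_zero (j : Fin 2) : eInt j ≠ 0 := by simp [eInt]

lemma blockSeq_ne_zero {w : Fin 2 → ℤ} (hw : w ≠ 0) (n : ℕ) (i : BlockIndex w n) :
    blockSeq w n i ≠ 0 := by
  rcases i with ⟨_, _ | p⟩ | ⟨j, _ | _⟩
  · exact hw
  · exact neg_ne_zero.mpr (eInt_ne_zero _)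
  · exact neg_ne_zero.mpr (eInt_ne_zero _)
  · exact eInt_ne_zero _

lemma blockSeq_sum {w : Fin 2 → ℤ} (hw : ∀ i, 0 ≤ w i) (n : ℕ) :
    ∑ i, blockSeq w n i = 0 := by
  have h0 := Int.toNat_of_nonneg (hw 0)
  have h1 := Int.toNat_of_nonneg (hw 1)
  simp only [Fintype.sum_sum_type, Fintype.sum_prod_type, Fintype.sum_option, Fintype.sum_sigma,
    Fintype.sum_bool, blockSeq, Fin.sum_univ_two, Finset.sum_const, Finset.card_univ,
    Fintype.card_fin]
  funext j
  fin_cases j <;> simp [eInt, h0, h1]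

lemma card_blockIndex (w : Fin 2 → ℤ) (n : ℕ) :
    Fintype.card (BlockIndex w n) = n * (1 + (w 0).toNat + (w 1).toNat) + 4 := by
  simp only [BlockIndex, Fintype.card_sum, Fintype.card_prod, Fintype.card_option,
    Fintype.card_sigma, Fintype.card_fin, Fintype.card_bool, Fin.sum_univ_two]
  ring

lemma blockSeq_cost (h : IsStronglyConvexDomain Ω) (w : Fin 2 → ℤ) (n : ℕ) :
    ∑ i, omegaNorm Ω (toR (blockSeq w n i)) ≤
      n * omegaNorm Ω (toR w) + (omegaNorm Ω (toR (eInt 0)) + omegaNorm Ω (toR (eInt 1))) := by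
  have hneg : ∀ j, omegaNorm Ω (toR (-eInt j)) = 0 := fun j => by
    refine le_antisymm (h.omegaNorm_nonpos fun i => ?_) (h.omegaNorm_nonneg _)
    simp only [toR, eInt, Pi.neg_apply, Pi.single_apply]
    split_ifs <;> simp
  simp only [Fintype.sum_sum_type, Fintype.sum_prod_type, Fintype.sum_option,
    Fintype.sum_bool, blockSeq, Fin.sum_univ_two, Finset.sum_const, Finset.card_univ,
    Fintype.card_fin, hneg]
  simp

lemma bddBelow_uSet (h : IsStronglyConvexDomain Ω) (k : ℕ) : BddBelow (uSet Ω k) :=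
  ⟨_, fun _ hx => lower_bound h (uSet_subset_lSet Ω k hx)⟩

lemma bddBelow_lSet (h : IsStronglyConvexDomain Ω) (k : ℕ) : BddBelow (lSet Ω k) :=
  ⟨_, fun _ hx => lower_bound h hx⟩

lemma blockSeq_mem_uSet {w : Fin 2 → ℤ} (hw : ∀ i, 0 ≤ w i) (hw' : w ≠ 0) {k n : ℕ}
    (hn : k ≤ n * (1 + (w 0).toNat + (w 1).toNat)) :
    ∑ i, omegaNorm Ω (toR (blockSeq w n i)) ∈ uSet Ω k := by
  refine mem_uSet_of_fintype _ ?_ (blockSeq_ne_zero hw' n) (blockSeq_sum hw n) fun j => ?_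
  · rw [card_blockIndex]
    omega
  · exact ⟨.inr (j + 1, true), j + 1, by fin_cases j <;> decide, by simp [blockSeq, eInt]⟩

lemma uSet_nonempty (Ω : Set (Fin 2 → ℝ)) (k : ℕ) : (uSet Ω k).Nonempty :=
  ⟨_, blockSeq_mem_uSet (w := fun _ => 1) (n := k) (fun _ => zero_le_one)
    (fun h => one_ne_zero (congrFun h 0)) (by simp; omega)⟩

lemma uk_le (h : IsStronglyConvexDomain Ω) {w : Fin 2 → ℤ} (hw : ∀ i, 0 ≤ w i) (hw' : w ≠ 0)
    (k : ℕ) :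
    uk Ω k ≤ omegaNorm Ω (toR w) / (1 + (w 0 : ℝ) + (w 1 : ℝ)) * k +
      (omegaNorm Ω (toR w) + (omegaNorm Ω (toR (eInt 0)) + omegaNorm Ω (toR (eInt 1)))) := by
  have h0 : (((w 0).toNat : ℤ) : ℝ) = (w 0 : ℝ) := by rw [Int.toNat_of_nonneg (hw 0)]
  have h1 : (((w 1).toNat : ℤ) : ℝ) = (w 1 : ℝ) := by rw [Int.toNat_of_nonneg (hw 1)]
  set s : ℕ := 1 + (w 0).toNat + (w 1).toNat with hs
  have hsR : 1 + (w 0 : ℝ) + (w 1 : ℝ) = s := by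
    rw [← h0, ← h1, hs]
    push_cast
    rfl
  have hspos : 0 < s := by omega
  have hn : k ≤ (k / s + 1) * s := by
    rw [mul_comm]
    exact (Nat.lt_mul_div_succ k hspos).le
  have hdiv : ((k / s : ℕ) : ℝ) ≤ (k : ℝ) / s := Nat.cast_div_le
  have hN := h.omegaNorm_nonneg (toR w)
  refine (csInf_le (bddBelow_uSet h k) (blockSeq_mem_uSet hw hw' hn)).trans
    ((blockSeq_cost h w _).trans ?_)
  rw [hsR]
  have : ((k / s : ℕ) : ℝ) * omegaNorm Ω (toR w) ≤ omegaNorm Ω (toR w) / s * k := by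
    calc _ ≤ (k : ℝ) / s * omegaNorm Ω (toR w) := mul_le_mul_of_nonneg_right hdiv hN
      _ = _ := by ring
  push_cast
  linarith

/-! ### The squeeze -/

lemma lk_le_uk (h : IsStronglyConvexDomain Ω) (k : ℕ) : lk Ω k ≤ uk Ω k :=
  csInf_le_csInf (bddBelow_lSet h k) (uSet_nonempty Ω k) (uSet_subset_lSet Ω k)

lemma le_lk_div (h : IsStronglyConvexDomain Ω) {k : ℕ} (hk : 0 < k) :
    sInf (ratioSet Ω) ≤ lk Ω k / k := by
  have hk' : (0 : ℝ) < k := by exact_mod_cast hk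
  have hL : 0 ≤ sInf (ratioSet Ω) := Real.sInf_nonneg fun x hx => ratioSet_nonneg h hx
  rw [le_div_iff₀ hk']
  have : sInf (ratioSet Ω) * (k + 1) ≤ lk Ω k :=
    le_csInf ((uSet_nonempty Ω k).mono (uSet_subset_lSet Ω k)) fun x hx => lower_bound h hx
  linarith

lemma eventually_uk_div_lt (h : IsStronglyConvexDomain Ω) {b : ℝ} (hb : sInf (ratioSet Ω) < b) :
    ∀ᶠ k : ℕ in atTop, uk Ω k / k < b := by
  obtain ⟨x, ⟨w, hw, hw', rfl⟩, hx⟩ := exists_lt_of_csInf_lt (ratioSet_nonempty Ω) hb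
  set r := omegaNorm Ω (toR w) / (1 + (w 0 : ℝ) + (w 1 : ℝ))
  set C := omegaNorm Ω (toR w) + (omegaNorm Ω (toR (eInt 0)) + omegaNorm Ω (toR (eInt 1))) with hC
  have hlim : Tendsto (fun k : ℕ => r + C / k) atTop (nhds (r + 0)) :=
    tendsto_const_nhds.add (tendsto_const_div_atTop_nhds_zero_nat C)
  rw [add_zero] at hlim
  filter_upwards [hlim.eventually_lt_const hx, eventually_gt_atTop 0] with k hk hk0
  have hk' : (0 : ℝ) < k := by exact_mod_cast hk0
  refine lt_of_le_of_lt ?_ hk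
  rw [div_le_iff₀ hk', add_mul, div_mul_cancel₀ _ hk'.ne']
  exact uk_le h hw hw' k

end

/-- For a strongly convex moment domain `Ω`, the limits
`lim_{k→∞} 𝔩_k(Ω)/k` and `lim_{k→∞} 𝔲_k(Ω)/k` exist and both equal
`inf { ‖w‖*_Ω / (1 + w₁ + w₂) : w ∈ ℤ²_{≥0} \ 0 }`. -/
theorem lk_uk_asymptotics (Ω : Set (Fin 2 → ℝ)) (h : IsStronglyConvexDomain Ω) :
    Filter.Tendsto (fun k : ℕ => lk Ω k / (k : ℝ)) Filter.atTop
      (nhds (sInf {x : ℝ | ∃ w : Fin 2 → ℤ, (∀ i, 0 ≤ w i) ∧ w ≠ 0 ∧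
        x = omegaNorm Ω (toR w) / (1 + (w 0 : ℝ) + (w 1 : ℝ))})) ∧
    Filter.Tendsto (fun k : ℕ => uk Ω k / (k : ℝ)) Filter.atTop
      (nhds (sInf {x : ℝ | ∃ w : Fin 2 → ℤ, (∀ i, 0 ≤ w i) ∧ w ≠ 0 ∧
        x = omegaNorm Ω (toR w) / (1 + (w 0 : ℝ) + (w 1 : ℝ))})) := by
  have hu : Tendsto (fun k : ℕ => uk Ω k / (k : ℝ)) atTop (nhds (sInf (ratioSet Ω))) := by
    refine tendsto_order.2 ⟨fun a ha => ?_, fun b hb => eventually_uk_div_lt h hb⟩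
    filter_upwards [eventually_gt_atTop 0] with k hk
    exact ha.trans_le ((le_lk_div h hk).trans (by gcongr; exact lk_le_uk h k))
  refine ⟨tendsto_of_tendsto_of_tendsto_of_le_of_le' tendsto_const_nhds hu ?_ ?_, hu⟩
  · filter_upwards [eventually_gt_atTop 0] with k hk
    exact le_lk_div h hk
  · filter_upwards with k
    gcongr
    exact lk_le_uk h k
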